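/- For a smooth function f with compact support on ℝⁿ (n ≥ 3), the Newtonian-potential identity holds: f(x) = -1/((n-2) S_{n-1}) ∫_{ℝⁿ} Δf(y) / ‖x - y‖^{n-2} dy, where S_{n-1} is the surface area of the unit (n-1)-sphere. -/

import Mathlib

open MeasureTheory

/-- The Euclidean Laplacian of `f : ℝⁿ → ℝ`: the sum of the second partial
derivatives `∑ i, ∂²f/∂xᵢ²`. -/
noncomputable def euclideanLaplacian {n : ℕ} (f : EuclideanSpace ℝ (Fin n) → ℝ)
    (x : EuclideanSpace ℝ (Fin n)) : ℝ :=
  ∑ i : Fin n,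
    fderiv ℝ (fun y => fderiv ℝ f y (EuclideanSpace.single i 1)) x (EuclideanSpace.single i 1)

/-- The surface area `S_{n-1}` of the unit `(n-1)`-sphere in `ℝⁿ`, equal to `n`
times the volume of the unit ball. -/
noncomputable def sphereArea (n : ℕ) : ℝ :=
  n * (volume (Metric.ball (0 : EuclideanSpace ℝ (Fin n)) 1)).toReal

open Filter Topology


lemma green_aux {n : ℕ} (f G : EuclideanSpace ℝ (Fin n) → ℝ) (hf : ContDiff ℝ (⊤ : ℕ∞) f)
    (hG : ContDiff ℝ (⊤ : ℕ∞) G) (hs : HasCompactSupport f) :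
    ∫ y, G y * euclideanLaplacian f y = ∫ y, euclideanLaplacian G y * f y := by
  have hd : ∀ (g : EuclideanSpace ℝ (Fin n) → ℝ) (v : EuclideanSpace ℝ (Fin n)),
      ContDiff ℝ (⊤ : ℕ∞) g → ContDiff ℝ (⊤ : ℕ∞) (fun y => fderiv ℝ g y v) := by
    intro g v hg
    exact (hg.fderiv_right (m := (⊤ : ℕ∞)) (by simp)).clm_apply contDiff_const
  have hc : ∀ (g : EuclideanSpace ℝ (Fin n) → ℝ) (v : EuclideanSpace ℝ (Fin n)),
      HasCompactSupport g → HasCompactSupport (fun y => fderiv ℝ g y v) := by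
    intro g v hg
    exact hg.fderiv_apply ℝ v
  have hi : ∀ (a b : EuclideanSpace ℝ (Fin n) → ℝ), ContDiff ℝ (⊤ : ℕ∞) a →
      ContDiff ℝ (⊤ : ℕ∞) b → HasCompactSupport b → Integrable (fun y => a y * b y) := by
    intro a b ha hb hbs
    exact (ha.continuous.mul hb.continuous).integrable_of_hasCompactSupport hbs.mul_left
  unfold euclideanLaplacian
  simp_rw [Finset.mul_sum, Finset.sum_mul]
  rw [integral_finsetSum, integral_finsetSum]
  · refine Finset.sum_congr rfl fun i _ => ?_
    set e := (EuclideanSpace.single i 1 : EuclideanSpace ℝ (Fin n))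
    have hne : ((⊤ : ℕ∞) : WithTop ℕ∞) ≠ 0 := by simp
    rw [integral_mul_fderiv_eq_neg_fderiv_mul_of_integrable,
      integral_mul_fderiv_eq_neg_fderiv_mul_of_integrable, neg_neg]
    · exact hi _ _ (hd _ _ (hd _ _ hG)) hf hs
    · exact hi _ _ (hd _ _ hG) (hd _ _ hf) (hc _ _ hs)
    · exact hi _ _ (hd _ _ hG) hf hs
    · exact fun x _ => (hd _ _ hG).differentiable hne x
    · exact fun x _ => hf.differentiable hne x
    · exact hi _ _ (hd _ _ hG) (hd _ _ hf) (hc _ _ hs)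
    · exact hi _ _ hG (hd _ _ (hd _ _ hf)) (hc _ _ (hc _ _ hs))
    · exact hi _ _ hG (hd _ _ hf) (hc _ _ hs)
    · exact fun x _ => hG.differentiable hne x
    · exact fun x _ => (hd _ _ hf).differentiable hne x
  · exact fun i _ => hi _ _ (hd _ _ (hd _ _ hG)) hf hs
  · exact fun i _ => hi _ _ hG (hd _ _ (hd _ _ hf)) (hc _ _ (hc _ _ hs))

lemma lap_aux {n : ℕ} (x : EuclideanSpace ℝ (Fin n)) (d : ℝ) (hd : 0 < d)
    (y : EuclideanSpace ℝ (Fin n)) :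
    euclideanLaplacian (fun y => (d + ‖y - x‖ ^ 2) ^ (-((n : ℝ) - 2) / 2)) y =
      -((n - 2) * n) * (d * (d + ‖y - x‖ ^ 2) ^ (-((n : ℝ) + 2) / 2)) := by
  have hq : ∀ y, 0 < d + ‖y - x‖ ^ 2 := fun y => by positivity
  have hN : ∀ y, HasFDerivAt (fun y => d + ‖y - x‖ ^ 2) (2 • (innerSL ℝ (y - x))) y := by
    intro y
    have := ((hasFDerivAt_id y).sub_const x).norm_sq.const_add d
    simpa using this
  have h1 : ∀ (p : ℝ) y, HasFDerivAt (fun y => (d + ‖y - x‖ ^ 2) ^ p)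
      ((p * (d + ‖y - x‖ ^ 2) ^ (p - 1)) • (2 • (innerSL ℝ (y - x)))) y := by
    intro p y
    exact (hN y).rpow_const (Or.inl (hq y).ne')
  have h2 : ∀ i : Fin n, (fun y => fderiv ℝ (fun y => (d + ‖y - x‖ ^ 2) ^ (-((n : ℝ) - 2) / 2)) y
      (EuclideanSpace.single i 1)) =
      fun y => (-((n : ℝ) - 2) * (d + ‖y - x‖ ^ 2) ^ (-(n : ℝ) / 2)) * (y i - x i) := by
    intro i
    funext y
    rw [(h1 _ y).fderiv]
    simp [EuclideanSpace.inner_single_right]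
    rw [show (2 - (n : ℝ)) / 2 - 1 = -(n : ℝ) / 2 by ring]
    ring
  have h3 : ∀ i : Fin n, HasFDerivAt (fun y : EuclideanSpace ℝ (Fin n) => y i - x i)
      (EuclideanSpace.proj i : EuclideanSpace ℝ (Fin n) →L[ℝ] ℝ) y := by
    intro i
    exact (EuclideanSpace.proj i : EuclideanSpace ℝ (Fin n) →L[ℝ] ℝ).hasFDerivAt.sub_const _
  unfold euclideanLaplacian
  simp_rw [h2]
  have h4 : ∀ i : Fin n, fderiv ℝ (fun y : EuclideanSpace ℝ (Fin n) =>
      (-((n : ℝ) - 2) * (d + ‖y - x‖ ^ 2) ^ (-(n : ℝ) / 2)) * (y i - x i)) y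
      (EuclideanSpace.single i 1) =
      -((n : ℝ) - 2) * ((d + ‖y - x‖ ^ 2) ^ (-(n : ℝ) / 2)
        - n * (d + ‖y - x‖ ^ 2) ^ (-((n : ℝ) + 2) / 2) * (y i - x i) ^ 2) := by
    intro i
    rw [(((h1 _ y).const_mul _).fun_mul (h3 i)).fderiv]
    simp [EuclideanSpace.inner_single_right]
    rw [show -(n : ℝ) / 2 - 1 = (-2 + -(n : ℝ)) / 2 by ring]
    ring
  simp_rw [h4]
  rw [← Finset.mul_sum, Finset.sum_sub_distrib, ← Finset.mul_sum]
  have h5 : ∑ i, (y i - x i) ^ 2 = ‖y - x‖ ^ 2 := by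
    simp [EuclideanSpace.norm_sq_eq]
  have h6 : (d + ‖y - x‖ ^ 2) ^ (-(n : ℝ) / 2) =
      (d + ‖y - x‖ ^ 2) ^ (-((n : ℝ) + 2) / 2) * (d + ‖y - x‖ ^ 2) := by
    rw [← Real.rpow_add_one (hq y).ne']
    congr 1; ring
  rw [h5, h6]
  simp
  ring

lemma const_aux {n : ℕ} (hn : 3 ≤ n) :
    ∫ z : EuclideanSpace ℝ (Fin n), (1 + ‖z‖ ^ 2) ^ (-((n : ℝ) + 2) / 2) =
      (volume (Metric.ball (0 : EuclideanSpace ℝ (Fin n)) 1)).toReal := by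
  have hn0 : (n : ℝ) ≠ 0 := by positivity
  have : Nonempty (Fin n) := ⟨⟨0, by omega⟩⟩
  rw [integral_fun_norm_addHaar volume (fun r : ℝ => (1 + r ^ 2) ^ (-((n : ℝ) + 2) / 2)),
    finrank_euclideanSpace_fin]
  have hder : ∀ r ∈ Set.Ioi (0 : ℝ), HasDerivAt (fun r : ℝ => r ^ n * (1 + r ^ 2) ^ (-(n : ℝ) / 2))
      (n * (r ^ (n - 1) • (1 + r ^ 2) ^ (-((n : ℝ) + 2) / 2))) r := by
    intro r _
    have hq : 0 < 1 + r ^ 2 := by positivity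
    have a1 : HasDerivAt (fun r : ℝ => 1 + r ^ 2) (2 * r) r := by
      simpa using (hasDerivAt_pow 2 r).const_add 1
    have a2 := a1.rpow_const (p := -(n : ℝ) / 2) (Or.inl hq.ne')
    have a3 := (hasDerivAt_pow n r).fun_mul a2
    refine a3.congr_deriv ?_
    have h6 : (1 + r ^ 2) ^ (-(n : ℝ) / 2) =
        (1 + r ^ 2) ^ (-((n : ℝ) + 2) / 2) * (1 + r ^ 2) := by
      rw [← Real.rpow_add_one hq.ne']
      congr 1; ring
    rw [h6, show -(n : ℝ) / 2 - 1 = -((n : ℝ) + 2) / 2 by ring]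
    obtain ⟨m, rfl⟩ : ∃ m, n = m + 1 := ⟨n - 1, by omega⟩
    simp only [smul_eq_mul, Nat.add_sub_cancel]
    ring
  have hlim : Tendsto (fun r : ℝ => r ^ n * (1 + r ^ 2) ^ (-(n : ℝ) / 2)) atTop (𝓝 1) := by
    have b1 : Tendsto (fun r : ℝ => (1 - (1 + r ^ 2)⁻¹) ^ ((n : ℝ) / 2)) atTop (𝓝 1) := by
      have b0 : Tendsto (fun r : ℝ => 1 + r ^ 2) atTop atTop :=
        tendsto_atTop_add_const_left _ _ (tendsto_pow_atTop (by norm_num))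
      have b2 : Tendsto (fun r : ℝ => 1 - (1 + r ^ 2)⁻¹) atTop (𝓝 (1 - 0)) :=
        tendsto_const_nhds.sub b0.inv_tendsto_atTop
      rw [sub_zero] at b2
      have b3 := b2.rpow_const (p := (n : ℝ) / 2) (Or.inl one_ne_zero)
      rwa [Real.one_rpow] at b3
    refine b1.congr' ?_
    filter_upwards [eventually_gt_atTop 0] with r hr
    have hq : 0 < 1 + r ^ 2 := by positivity
    rw [show 1 - (1 + r ^ 2)⁻¹ = r ^ 2 * (1 + r ^ 2)⁻¹ by field_simp; ring,
      Real.mul_rpow (by positivity) (by positivity), Real.inv_rpow hq.le, ← Real.rpow_neg hq.le,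
      ← Real.rpow_natCast r 2, ← Real.rpow_mul hr.le, ← Real.rpow_natCast r n]
    congr 2
    · push_cast; ring
    · ring
  have hint := integral_Ioi_of_hasDerivAt_of_nonneg (a := 0) (l := 1)
    (g := fun r : ℝ => r ^ n * (1 + r ^ 2) ^ (-(n : ℝ) / 2)) ?_ hder ?_ hlim
  · rw [integral_const_mul] at hint
    simp only [ne_eq, show n ≠ 0 by omega, not_false_eq_true, zero_pow, zero_mul, sub_zero] at hint
    rw [nsmul_eq_mul, smul_eq_mul, mul_left_comm, hint, mul_one]
    rfl
  · refine Continuous.continuousWithinAt ?_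
    refine (continuous_pow n).mul (Continuous.rpow_const (by fun_prop) fun r => Or.inl ?_)
    positivity
  · intro r hr
    have : (0 : ℝ) < r := hr
    simp only [smul_eq_mul]
    positivity

lemma scale_aux {n : ℕ} (f : EuclideanSpace ℝ (Fin n) → ℝ) (x : EuclideanSpace ℝ (Fin n))
    (ε : ℝ) (hε : 0 < ε) :
    ∫ y, (ε ^ 2 * (ε ^ 2 + ‖y - x‖ ^ 2) ^ (-((n : ℝ) + 2) / 2)) * f y =
      ∫ z : EuclideanSpace ℝ (Fin n), (1 + ‖z‖ ^ 2) ^ (-((n : ℝ) + 2) / 2) * f (x + ε • z) := by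
  have h := Measure.integral_comp_smul (volume : Measure (EuclideanSpace ℝ (Fin n)))
    (fun w => (ε ^ 2 * (ε ^ 2 + ‖w‖ ^ 2) ^ (-((n : ℝ) + 2) / 2)) * f (x + w)) ε
  have h' := integral_add_left_eq_self (μ := (volume : Measure (EuclideanSpace ℝ (Fin n))))
    (fun y => (ε ^ 2 * (ε ^ 2 + ‖y - x‖ ^ 2) ^ (-((n : ℝ) + 2) / 2)) * f y) x
  simp only [add_sub_cancel_left] at h'
  rw [h'] at h
  have hp : 0 < ε ^ n := by positivity
  rw [finrank_euclideanSpace_fin, abs_of_pos (by positivity), smul_eq_mul] at h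
  rw [eq_comm, inv_mul_eq_iff_eq_mul₀ hp.ne'] at h
  rw [h, ← integral_const_mul]
  congr 1
  funext z
  rw [norm_smul, mul_pow, Real.norm_eq_abs, sq_abs,
    show ε ^ 2 + ε ^ 2 * ‖z‖ ^ 2 = ε ^ 2 * (1 + ‖z‖ ^ 2) by ring,
    Real.mul_rpow (by positivity) (by positivity), ← Real.rpow_natCast ε 2, ← Real.rpow_mul hε.le,
    ← mul_assoc, ← mul_assoc, ← mul_assoc, ← Real.rpow_natCast ε n, ← Real.rpow_add hε, ← Real.rpow_add hε]
  rw [show (n : ℝ) + (2 : ℕ) + (2 : ℕ) * (-((n : ℝ) + 2) / 2) = 0 by push_cast; ring]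
  simp

lemma lap_cont {n : ℕ} (f : EuclideanSpace ℝ (Fin n) → ℝ) (hf : ContDiff ℝ (⊤ : ℕ∞) f) :
    Continuous (euclideanLaplacian f) := by
  have hd : ∀ (g : EuclideanSpace ℝ (Fin n) → ℝ) (v : EuclideanSpace ℝ (Fin n)),
      ContDiff ℝ (⊤ : ℕ∞) g → ContDiff ℝ (⊤ : ℕ∞) (fun y => fderiv ℝ g y v) := by
    intro g v hg
    exact (hg.fderiv_right (m := (⊤ : ℕ∞)) (by simp)).clm_apply contDiff_const
  exact continuous_finsetSum _ fun i _ => (hd _ _ (hd _ _ hf)).continuous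

lemma lap_supp {n : ℕ} (f : EuclideanSpace ℝ (Fin n) → ℝ) (hs : HasCompactSupport f) :
    HasCompactSupport (euclideanLaplacian f) := by
  refine hs.of_isClosed_subset (isClosed_tsupport _) (closure_minimal ?_ (isClosed_tsupport _))
  intro y hy
  by_contra hny
  apply hy
  unfold euclideanLaplacian
  refine Finset.sum_eq_zero fun i _ => ?_
  have h := (tsupport_fderiv_apply_subset (𝕜 := ℝ) (f := fun y => fderiv ℝ f y (EuclideanSpace.single i 1))
    (EuclideanSpace.single i 1)).trans (tsupport_fderiv_apply_subset (𝕜 := ℝ) (f := f) _)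
  exact image_eq_zero_of_notMem_tsupport (f := fun x => fderiv ℝ (fun y => fderiv ℝ f y (EuclideanSpace.single i 1)) x (EuclideanSpace.single i 1)) (fun hh => hny (h hh))

lemma sing_int {n : ℕ} (hn : 3 ≤ n) (g : EuclideanSpace ℝ (Fin n) → ℝ) (hg : Continuous g)
    (hs : HasCompactSupport g) (x : EuclideanSpace ℝ (Fin n)) :
    Integrable (fun y => g y / ‖x - y‖ ^ (n - 2)) := by
  have : Nonempty (Fin n) := ⟨⟨0, by omega⟩⟩
  have key : ∀ h : EuclideanSpace ℝ (Fin n) → ℝ, Continuous h → HasCompactSupport h →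
      Integrable (fun w => h w / ‖w‖ ^ (n - 2)) := by
    intro h hh hhs
    obtain ⟨R, hR⟩ := hhs.isCompact.isBounded.subset_ball (0 : EuclideanSpace ℝ (Fin n))
    obtain ⟨C, hC⟩ := hhs.exists_bound_of_continuous hh
    have h1 : IntegrableOn (fun w : EuclideanSpace ℝ (Fin n) => (‖w‖ ^ (n - 2))⁻¹)
        (Metric.ball 0 R) := by
      rw [integrableOn_fun_norm_addHaar volume (f := fun r : ℝ => (r ^ (n - 2))⁻¹),
        finrank_euclideanSpace_fin]
      have : IntegrableOn (fun r : ℝ => r) (Set.Ioo 0 R) :=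
        (continuous_id.integrableOn_Icc).mono_set Set.Ioo_subset_Icc_self
      refine this.congr_fun (fun r hr => ?_) measurableSet_Ioo
      have hr0 : (0 : ℝ) < r := hr.1
      simp only [smul_eq_mul]
      rw [show n - 1 = (n - 2) + 1 by omega, pow_succ]
      field_simp
    have h2 : IntegrableOn (fun w => h w / ‖w‖ ^ (n - 2)) (Metric.ball 0 R) := by
      simp_rw [div_eq_mul_inv]
      exact h1.bdd_mul hh.aestronglyMeasurable (Eventually.of_forall hC)
    refine (integrableOn_iff_integrable_of_support_subset ?_).1 h2
    intro w hw
    apply hR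
    apply subset_tsupport
    intro h0
    apply hw
    simp [h0]
  have := (key (fun w => g (x - w)) (by fun_prop)
    (hs.comp_homeomorph (Homeomorph.subLeft x))).comp_sub_left x
  simpa using this

theorem newtonian_potential_identity {n : ℕ} (hn : 3 ≤ n)
    (f : EuclideanSpace ℝ (Fin n) → ℝ) (hf : ContDiff ℝ (⊤ : ℕ∞) f)
    (hsupp : HasCompactSupport f) (x : EuclideanSpace ℝ (Fin n)) :
    f x = -(1 / (((n : ℝ) - 2) * sphereArea n)) *
      ∫ y : EuclideanSpace ℝ (Fin n), euclideanLaplacian f y / ‖x - y‖ ^ (n - 2) := by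
  have : Nonempty (Fin n) := ⟨⟨0, by omega⟩⟩
  have hn3 : (3 : ℝ) ≤ n := by exact_mod_cast hn
  have hLc := lap_cont f hf
  have hLs := lap_supp f hsupp
  have heq : ∀ ε : ℝ, 0 < ε →
      ∫ y, (ε ^ 2 + ‖y - x‖ ^ 2) ^ (-((n : ℝ) - 2) / 2) * euclideanLaplacian f y =
      -(((n : ℝ) - 2) * n) * ∫ z : EuclideanSpace ℝ (Fin n),
        (1 + ‖z‖ ^ 2) ^ (-((n : ℝ) + 2) / 2) * f (x + ε • z) := by
    intro ε hε
    rw [green_aux f _ hf ?_ hsupp, ← scale_aux f x ε hε, ← integral_const_mul]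
    · simp_rw [lap_aux x (ε ^ 2) (by positivity), mul_assoc]
    · refine ContDiff.rpow_const_of_ne ?_ fun y => ?_
      · exact contDiff_const.add ((contDiff_id.sub contDiff_const).norm_sq ℝ)
      · positivity
  have hlim1 : Tendsto (fun ε : ℝ =>
      ∫ y, (ε ^ 2 + ‖y - x‖ ^ 2) ^ (-((n : ℝ) - 2) / 2) * euclideanLaplacian f y) (𝓝[>] 0)
      (𝓝 (∫ y, euclideanLaplacian f y / ‖x - y‖ ^ (n - 2))) := by
    have hpw : ∀ y, y ≠ x →
        (‖y - x‖ ^ 2) ^ (-((n : ℝ) - 2) / 2) = (‖x - y‖ ^ (n - 2))⁻¹ := by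
      intro y hy
      rw [norm_sub_rev x y, ← Real.rpow_natCast _ 2, ← Real.rpow_mul (norm_nonneg _),
        ← Real.rpow_natCast _ (n - 2), ← Real.rpow_neg (norm_nonneg _)]
      congr 1
      rw [Nat.cast_sub (by omega)]
      push_cast
      ring
    have hae : ∀ᵐ y ∂(volume : Measure (EuclideanSpace ℝ (Fin n))), y ≠ x := by
      simp [ae_iff]
    refine tendsto_integral_filter_of_dominated_convergence
      (fun y => ‖euclideanLaplacian f y / ‖x - y‖ ^ (n - 2)‖) ?_ ?_
      (sing_int hn _ hLc hLs x).norm ?_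
    · filter_upwards [self_mem_nhdsWithin] with ε hε
      have hε : 0 < ε := hε
      refine Continuous.aestronglyMeasurable ?_
      refine (Continuous.rpow_const (by fun_prop) fun r => Or.inl ?_).mul hLc
      positivity
    · filter_upwards [self_mem_nhdsWithin] with ε hε
      filter_upwards [hae] with y hy
      have h0 : 0 < ‖y - x‖ := norm_pos_iff.2 (sub_ne_zero.2 hy)
      rw [div_eq_mul_inv (euclideanLaplacian f y), mul_comm, norm_mul, norm_mul, ← hpw y hy]
      refine mul_le_mul_of_nonneg_left ?_ (norm_nonneg _)
      rw [Real.norm_of_nonneg (by positivity), Real.norm_of_nonneg (by positivity)]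
      refine Real.rpow_le_rpow_of_nonpos (by positivity) (by nlinarith [sq_nonneg ε]) (by linarith)
    · filter_upwards [hae] with y hy
      have h0 : 0 < ‖y - x‖ := norm_pos_iff.2 (sub_ne_zero.2 hy)
      have hc : ContinuousAt (fun ε : ℝ =>
          (ε ^ 2 + ‖y - x‖ ^ 2) ^ (-((n : ℝ) - 2) / 2) * euclideanLaplacian f y) 0 := by
        refine ContinuousAt.mul (ContinuousAt.rpow_const (by fun_prop) (Or.inl ?_)) continuousAt_const
        positivity
      have := hc.tendsto.mono_left (nhdsWithin_le_nhds (s := Set.Ioi 0))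
      convert this using 2
      rw [zero_pow two_ne_zero, zero_add, hpw y hy, div_eq_mul_inv, mul_comm]
  have hlim2 : Tendsto (fun ε : ℝ => ∫ z : EuclideanSpace ℝ (Fin n),
        (1 + ‖z‖ ^ 2) ^ (-((n : ℝ) + 2) / 2) * f (x + ε • z)) (𝓝[>] 0)
      (𝓝 (∫ z : EuclideanSpace ℝ (Fin n), (1 + ‖z‖ ^ 2) ^ (-((n : ℝ) + 2) / 2) * f x)) := by
    obtain ⟨C, hC⟩ := hsupp.exists_bound_of_continuous hf.continuous
    have hi : Integrable (fun z : EuclideanSpace ℝ (Fin n) =>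
        (1 + ‖z‖ ^ 2) ^ (-((n : ℝ) + 2) / 2)) :=
      integrable_rpow_neg_one_add_norm_sq (by simp)
    have hfc := hf.continuous
    refine tendsto_integral_filter_of_dominated_convergence
      (fun z => (1 + ‖z‖ ^ 2) ^ (-((n : ℝ) + 2) / 2) * C) ?_ ?_ (hi.mul_const C) ?_
    · refine Eventually.of_forall fun ε => ?_
      refine Continuous.aestronglyMeasurable ?_
      refine (Continuous.rpow_const (by fun_prop) fun r => Or.inl ?_).mul (by fun_prop)
      positivity
    · refine Eventually.of_forall fun ε => Eventually.of_forall fun z => ?_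
      rw [norm_mul, Real.norm_of_nonneg (by positivity)]
      exact mul_le_mul_of_nonneg_left (hC _) (by positivity)
    · refine Eventually.of_forall fun z => ?_
      have hc : Continuous (fun ε : ℝ => (1 + ‖z‖ ^ 2) ^ (-((n : ℝ) + 2) / 2) * f (x + ε • z)) := by
        fun_prop
      have := (hc.tendsto 0).mono_left (nhdsWithin_le_nhds (s := Set.Ioi 0))
      simpa using this
  rw [integral_mul_const, const_aux hn] at hlim2
  have hfin := tendsto_nhds_unique_of_eventuallyEq hlim1 (hlim2.const_mul (-(((n : ℝ) - 2) * n)))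
    (by filter_upwards [self_mem_nhdsWithin] with ε hε using heq ε hε)
  rw [hfin]
  have hV : 0 < (volume (Metric.ball (0 : EuclideanSpace ℝ (Fin n)) 1)).toReal :=
    ENNReal.toReal_pos (Metric.measure_ball_pos _ _ one_pos).ne' measure_ball_lt_top.ne
  have h2 : (n : ℝ) - 2 ≠ 0 := by linarith
  have h3 : (n : ℝ) ≠ 0 := by linarith
  unfold sphereArea
  field_simp
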